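/- Let a ∈ ℝ, a ≠ 0, let ω : (−∞,0] → ℝ be continuous, and let k be a positive integer. Then the set C^k_{a,ω}([−1,0]) is dense in the space C([−1,0]) of continuous real functions on [−1,0] equipped with the supremum norm. -/

import Mathlib

/-!
Density holds at every stage `i ≤ k` of the iterated integral, by induction on `i`. The innermost
stage represents a continuous function exactly, since `p` is free to absorb `ω`. For the step, the
Weierstrass theorem replaces `f - ω(· - j)` by a polynomial `q`; the function `q' / a` is
approximated uniformly at stage `i`, integration over an interval of length at most one preserves
this approximation up to the factor `|a|`, and the new constant `c_j = q(-1)` restores `q` from its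
derivative. Changing `c_j` does not disturb the inner stages (`iterRep_update`).
-/

open MeasureTheory Set

/-- The `i`-th stage (counted from the innermost integral outwards) of the `k`-fold
iterated-integral representation: `iterRep a ω p c k 0 = g_k` with
`g_k(v) = p(v) + c_k + ω(v-k)`, and
`iterRep a ω p c k (i+1) = g_{k-(i+1)}` with
`g_j(v) = a ∫_{-1}^{v} g_{j+1}(u) du + c_j + ω(v-j)`. -/
noncomputable def iterRep (a : ℝ) (ω : ℝ → ℝ) (p : ℝ → ℝ) (c : ℕ → ℝ) (k : ℕ) :
    ℕ → ℝ → ℝ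
  | 0 => fun v => p v + c k + ω (v - (k : ℝ))
  | (i + 1) => fun v =>
      a * (∫ u in (-1 : ℝ)..v, iterRep a ω p c k i u) + c (k - (i + 1))
        + ω (v - ((k - (i + 1) : ℕ) : ℝ))

/-- Membership in `C^k_{a,ω}([-1,0])`: `f` admits a `k`-fold iterated-integral
representation on `[-1,0]` with some `p_k ∈ C([-1,0])` and constants `c_0,…,c_k`. -/
noncomputable def memCk (a : ℝ) (ω : ℝ → ℝ) (k : ℕ) (f : ℝ → ℝ) : Prop :=
  ∃ (p : ℝ → ℝ) (c : ℕ → ℝ), ContinuousOn p (Set.Icc (-1 : ℝ) 0) ∧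
    ∀ v ∈ Set.Icc (-1 : ℝ) 0, f v = iterRep a ω p c k k v

theorem continuousOn_shift {ω : ℝ → ℝ} (hω : ContinuousOn ω (Set.Iic (0 : ℝ))) (n : ℕ) :
    ContinuousOn (fun v : ℝ => ω (v - (n : ℝ))) (Set.Icc (-1 : ℝ) 0) := by
  refine hω.comp (by fun_prop) fun v hv => ?_
  have hn : (0 : ℝ) ≤ n := n.cast_nonneg
  have := hv.2
  simp only [Set.mem_Iic]
  linarith

theorem continuousOn_iterRep (a : ℝ) {ω p : ℝ → ℝ} (hω : ContinuousOn ω (Set.Iic (0 : ℝ)))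
    (hp : ContinuousOn p (Set.Icc (-1 : ℝ) 0)) (c : ℕ → ℝ) (k i : ℕ) :
    ContinuousOn (iterRep a ω p c k i) (Set.Icc (-1 : ℝ) 0) := by
  induction i with
  | zero => exact (hp.add continuousOn_const).add (continuousOn_shift hω k)
  | succ i ih =>
    have hint : ContinuousOn (fun v => ∫ u in (-1 : ℝ)..v, iterRep a ω p c k i u)
        (Set.Icc (-1 : ℝ) 0) :=
      intervalIntegral.continuousOn_primitive_interval (ih.integrableOn_Icc.mono_set
        (by rw [Set.uIcc_of_le (by norm_num : (-1 : ℝ) ≤ 0)])) |>.mono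
        (by rw [Set.uIcc_of_le (by norm_num : (-1 : ℝ) ≤ 0)])
    exact ((continuousOn_const.mul hint).add continuousOn_const).add (continuousOn_shift hω _)

/-- Stage `i` involves only the constants `c_{k-i}, …, c_k`, so it ignores changes of `c_m` for
`m < k - i`. -/
theorem iterRep_update (a : ℝ) (ω p : ℝ → ℝ) (c : ℕ → ℝ) (k i m : ℕ) (x : ℝ) (hm : m + i < k) :
    iterRep a ω p (Function.update c m x) k i = iterRep a ω p c k i := by
  induction i with
  | zero =>
    funext v
    simp only [iterRep]
    rw [Function.update_of_ne (by omega)]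
  | succ i ih =>
    funext v
    simp only [iterRep]
    rw [ih (by omega), Function.update_of_ne (by omega)]

/-- Every stage `i ≤ k` of the representation is uniformly dense in `C([-1,0])`. -/
theorem exists_iterRep_near (a : ℝ) (ha : a ≠ 0) (ω : ℝ → ℝ)
    (hω : ContinuousOn ω (Set.Iic (0 : ℝ))) (k i : ℕ) (hi : i ≤ k) :
    ∀ f : ℝ → ℝ, ContinuousOn f (Set.Icc (-1 : ℝ) 0) → ∀ ε > (0 : ℝ),
      ∃ (p : ℝ → ℝ) (c : ℕ → ℝ), ContinuousOn p (Set.Icc (-1 : ℝ) 0) ∧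
        ∀ v ∈ Set.Icc (-1 : ℝ) 0, |f v - iterRep a ω p c k i v| < ε := by
  induction i with
  | zero =>
    intro f hf ε hε
    refine ⟨fun v => f v - ω (v - (k : ℝ)), 0, hf.sub (continuousOn_shift hω k), fun v _ => ?_⟩
    simpa [iterRep] using hε
  | succ i ih =>
    intro f hf ε hε
    obtain ⟨q, hq⟩ := exists_polynomial_near_of_continuousOn (-1) 0 _
      (hf.sub (continuousOn_shift hω (k - (i + 1)))) (ε / 2) (by positivity)
    have ha' : 0 < |a| := abs_pos.mpr ha
    obtain ⟨p, c, hp, hc⟩ := ih (by omega) (fun v => q.derivative.eval v / a)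
      (by fun_prop) (ε / 2 / |a|) (by positivity)
    refine ⟨p, Function.update c (k - (i + 1)) (q.eval (-1)), hp, fun v hv => ?_⟩
    simp only [iterRep]
    rw [iterRep_update _ _ _ _ _ _ _ _ (by omega), Function.update_self]
    set G := iterRep a ω p c k i with hG
    have hsub : Set.uIcc (-1) v ⊆ Set.Icc (-1 : ℝ) 0 := by
      rw [Set.uIcc_of_le hv.1]
      exact Set.Icc_subset_Icc_right hv.2
    have hGi : IntervalIntegrable G volume (-1) v :=
      ((continuousOn_iterRep a hω hp c k i).mono hsub).intervalIntegrable
    have hdi : IntervalIntegrable (fun u => q.derivative.eval u / a) volume (-1) v :=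
      Continuous.intervalIntegrable (by fun_prop) _ _
    have hftc : a * ∫ u in (-1 : ℝ)..v, q.derivative.eval u / a = q.eval v - q.eval (-1) := by
      rw [intervalIntegral.integral_div, mul_div_cancel₀ _ ha]
      exact intervalIntegral.integral_eq_sub_of_hasDerivAt (fun u _ => q.hasDerivAt u)
        (q.derivative.continuous.intervalIntegrable _ _)
    have herr : |∫ u in (-1 : ℝ)..v, (q.derivative.eval u / a - G u)| ≤ ε / 2 / |a| := by
      have h := intervalIntegral.norm_integral_le_of_norm_le_const (a := -1) (b := v)
        (f := fun u => q.derivative.eval u / a - G u) (C := ε / 2 / |a|)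
        fun u hu => (hc u (hsub (Set.uIoc_subset_uIcc hu))).le
      refine h.trans (mul_le_of_le_one_right (by positivity) ?_)
      have h1 := hv.1
      have h2 := hv.2
      rw [abs_le]
      constructor <;> linarith
    rw [intervalIntegral.integral_sub hdi hGi] at herr
    have herr2 := mul_le_mul_of_nonneg_left herr ha'.le
    rw [← abs_mul, mul_sub, hftc, mul_div_cancel₀ _ ha'.ne'] at herr2
    have hqv := hq v hv
    simp only [Pi.sub_apply] at hqv
    rw [abs_lt] at hqv ⊢
    rw [abs_le] at herr2
    constructor <;> linarith [hqv.1, hqv.2, herr2.1, herr2.2]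

theorem stmt_4 (a : ℝ) (ha : a ≠ 0) (ω : ℝ → ℝ) (hω : ContinuousOn ω (Set.Iic (0 : ℝ)))
    (k : ℕ) (hk : 1 ≤ k) :
    ∀ f : ℝ → ℝ, ContinuousOn f (Set.Icc (-1 : ℝ) 0) → ∀ ε > (0 : ℝ),
      ∃ g : ℝ → ℝ, memCk a ω k g ∧ ∀ v ∈ Set.Icc (-1 : ℝ) 0, |f v - g v| < ε := by
  intro f hf ε hε
  obtain ⟨p, c, hp, h⟩ := exists_iterRep_near a ha ω hω k k le_rfl f hf ε hε
  exact ⟨iterRep a ω p c k k, ⟨p, c, hp, fun _ _ => rfl⟩, h⟩
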